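/- Let a₁, a₂, b₁, b₂ ∈ ℂ and let X = X((a₁ a₂), I₂, …, I₂, I_{2×3}; (b₁, b₂)ᵀ) ∈ M_{2n+1}(ℂ) be as above. If a₂ = 0 then det(λ·I_{2n+1} − X) = λ·(λⁿ + (−1)^{n/2}·a₁b₁)², and if a₁ = 0 then det(λ·I_{2n+1} − X) = λ·(λⁿ + (−1)^{n/2}·a₂b₂)². In either case the characteristic polynomial of X has a repeated root, so X is not regular semisimple. -/

import Mathlib

open Matrix

/-- Read off the `(p, q)` entry (0-based, natural-number indices) of a matrix,
returning `0` out of range. -/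
noncomputable def fnOf {a b : ℕ} (B : Matrix (Fin a) (Fin b) ℂ) (p q : ℕ) : ℂ :=
  if h : p < a ∧ q < b then B ⟨p, h.1⟩ ⟨q, h.2⟩ else 0

/-- The `(i, j)` entry (0-based) of the matrix `X(A_1,…,A_{m/2}; A_{m+1}) ∈
M_{2n+1}(ℂ)` for the stable grading of order `m = n` on `so_{2n+1}(ℂ)`.
The block decomposition has row/column sizes `(1, 2, …, 2, 3, 2, …, 2, 1)`
(`m + 1` diagonal blocks), and the only possibly nonzero blocks are the
superdiagonal blocks `A_1, A_2, …, A_{m/2}, −s·A_{m/2}ᵀ·s, …, −s·A_1ᵀ·s`,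
the block `A_{m+1}` in block position `(m, 1)`, and the block
`−s·A_{m+1}ᵀ·s` in block position `(m+1, 2)` (1-based block positions).
Here `A1 = A_1` (1×2), `A i = A_i` for `2 ≤ i ≤ m/2 − 1` (2×2),
`Amid = A_{m/2}` (2×3) and `Alast = A_{m+1}` (2×1). -/
noncomputable def soEnt (n : ℕ) (A1 : Matrix (Fin 1) (Fin 2) ℂ)
    (A : ℕ → Matrix (Fin 2) (Fin 2) ℂ)
    (Amid : Matrix (Fin 2) (Fin 3) ℂ) (Alast : Matrix (Fin 2) (Fin 1) ℂ)
    (i j : ℕ) : ℂ :=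
  -- block (1,2): A_1
  if i = 0 ∧ 1 ≤ j ∧ j ≤ 2 then fnOf A1 0 (j - 1)
  -- blocks (r, r+1) for 2 ≤ r ≤ m/2 − 1 (1-based): A_r
  else if 1 ≤ i ∧ i ≤ n - 4 ∧ 2 * ((i + 1) / 2) + 1 ≤ j ∧ j ≤ 2 * ((i + 1) / 2) + 2 then
    fnOf (A ((i + 1) / 2 + 1)) (i + 1 - 2 * ((i + 1) / 2)) (j - (2 * ((i + 1) / 2) + 1))
  -- block (m/2, m/2+1): A_{m/2}
  else if n - 3 ≤ i ∧ i ≤ n - 2 ∧ n - 1 ≤ j ∧ j ≤ n + 1 then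
    fnOf Amid (i - (n - 3)) (j - (n - 1))
  -- block (m/2+1, m/2+2): −s·A_{m/2}ᵀ·s
  else if n - 1 ≤ i ∧ i ≤ n + 1 ∧ n + 2 ≤ j ∧ j ≤ n + 3 then
    -(fnOf Amid (n + 3 - j) (n + 1 - i))
  -- blocks (r, r+1) for m/2+2 ≤ r ≤ m−1 (1-based): −s·A_{m+1−r}ᵀ·s
  else if n + 2 ≤ i ∧ i ≤ 2 * n - 3 ∧ 2 * (i / 2) + 2 ≤ j ∧ j ≤ 2 * (i / 2) + 3 then
    -(fnOf (A (n - i / 2)) (2 * (i / 2) + 3 - j) (2 * (i / 2) + 1 - i))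
  -- block (m, m+1): −s·A_1ᵀ·s
  else if 2 * n - 2 ≤ i ∧ i ≤ 2 * n - 1 ∧ j = 2 * n then
    -(fnOf A1 0 (2 * n - 1 - i))
  -- block (m, 1): A_{m+1}
  else if 2 * n - 2 ≤ i ∧ i ≤ 2 * n - 1 ∧ j = 0 then
    fnOf Alast (i - (2 * n - 2)) 0
  -- block (m+1, 2): −s·A_{m+1}ᵀ·s
  else if i = 2 * n ∧ 1 ≤ j ∧ j ≤ 2 then
    -(fnOf Alast (2 - j) 0)
  else 0

/-- The matrix `X(A_1,…,A_{m/2}; A_{m+1}) ∈ M_{2n+1}(ℂ)` (with `m = n` even). -/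
noncomputable def soMat (n : ℕ) (A1 : Matrix (Fin 1) (Fin 2) ℂ)
    (A : ℕ → Matrix (Fin 2) (Fin 2) ℂ)
    (Amid : Matrix (Fin 2) (Fin 3) ℂ) (Alast : Matrix (Fin 2) (Fin 1) ℂ) :
    Matrix (Fin (2 * n + 1)) (Fin (2 * n + 1)) ℂ :=
  Matrix.of fun i j => soEnt n A1 A Amid Alast (i : ℕ) (j : ℕ)

/-
Write `n = 2m`. Column `n` of `X` vanishes, and `X` carries the other `2n` coordinates, grouped into
`n` pairs, cyclically from each pair to the next. Hence the characteristic polynomial of `X` is `λ`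
times that of the product of the `n` transfer matrices of size `2 × 2`, evaluated at `λⁿ`. All
transfer matrices but the first and the last are `±1`, and the product is
`-(-1)^m • !![a₁b₁ + a₂b₂, -2a₁a₂; -2b₁b₂, a₁b₁ + a₂b₂]`.
-/

open scoped Polynomial
open Polynomial (X C expand)

section BlockTriangular

variable {R κ α ι : Type*} [CommRing R] [Fintype κ] [DecidableEq κ] [LinearOrder α]
  [Fintype ι] [DecidableEq ι]

lemma det_comp_of_blockTriangular {A : Matrix κ κ (Matrix ι ι R)} {b : κ → α}
    (hA : A.BlockTriangular b) (hb : b.Injective) :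
    (comp κ κ ι ι R A).det = ∏ k, (A k k).det := by
  let _ : LinearOrder κ := .lift' b hb
  have hcomp : (comp κ κ ι ι R A).BlockTriangular Prod.fst := hA.comp
  rw [hcomp.det_fintype]
  refine Finset.prod_congr rfl fun k _ => ?_
  let fiber : ι ≃ {p : κ × ι // p.1 = k} :=
    { toFun i := ⟨(k, i), rfl⟩
      invFun p := p.1.2
      left_inv _ := rfl
      right_inv p := Subtype.ext (Prod.ext p.2.symm rfl) }
  rw [← det_submatrix_equiv_self fiber]
  rfl

end BlockTriangular

section WeightedCycle

variable {A : Type*} {n : ℕ} [NeZero n]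

/-- The weighted cyclic shift of size `n` with entries in `A`: row `k` has the single entry `w k`,
in column `k + 1` (modulo `n`). -/
def weightedCycle [Zero A] (w : Fin n → A) : Matrix (Fin n) (Fin n) A :=
  of fun k l => if l = k + 1 then w k else 0

lemma weightedCycle_map {B F : Type*} [Zero A] [Zero B] [FunLike F A B] [ZeroHomClass F A B]
    (f : F) (w : Fin n → A) : (weightedCycle w).map f = weightedCycle (f ∘ w) := by
  ext k l
  simp [weightedCycle, apply_ite f]

lemma weightedCycle_mulVec [NonUnitalNonAssocSemiring A] (w v : Fin n → A) (k : Fin n) :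
    (weightedCycle w *ᵥ v) k = w k * v (k + 1) := by
  simp [weightedCycle, mulVec, dotProduct]

lemma add_one_eq_zero_or_val_add_one (k : Fin n) :
    k + 1 = 0 ∧ (k : ℕ) + 1 = n ∨ k + 1 ≠ 0 ∧ ((k + 1 : Fin n) : ℕ) = k + 1 := by
  obtain hlast | hlt := (Nat.succ_le_of_lt k.isLt).eq_or_lt
  · exact .inl ⟨Fin.ext (by simp [Fin.val_add, ← hlast]), hlast⟩
  · have hval : ((k + 1 : Fin n) : ℕ) = k + 1 := Fin.val_add_one_of_lt' hlt
    exact .inr ⟨Fin.val_ne_zero_iff.1 (by lia), hval⟩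

variable {R : Type*} [CommRing R] [Ring A] [Algebra R A]

/-- The column vector with entries `x ^ (k - 1) • (w k * w (k + 1) * ⋯ * w (n - 1))` for `k ≠ 0`,
and `x ^ (n - 1)` in row `0`. It is chosen so that `x • 1 - weightedCycle w` sends it to a vector
supported in row `0`; replacing column `0` by it makes that matrix block triangular. -/
def pathVec (x : R) (w : Fin n → A) (k : Fin n) : A :=
  if k = 0 then x ^ (n - 1) • 1 else x ^ ((k : ℕ) - 1) • ((List.ofFn w).drop k).prod

lemma mul_pathVec_add_one (x : R) (w : Fin n → A) (k : Fin n) :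
    w k * pathVec x w (k + 1) = x ^ (k : ℕ) • ((List.ofFn w).drop k).prod := by
  have hdrop : ((List.ofFn w).drop k).prod = w k * ((List.ofFn w).drop (k + 1)).prod := by
    simp [List.drop_eq_getElem_cons]
  rw [hdrop, ← mul_smul_comm]
  obtain ⟨hzero, hlast⟩ | ⟨hne, hval⟩ := add_one_eq_zero_or_val_add_one k
  · have hnil : (List.ofFn w).drop (k + 1) = [] := by simp [hlast]
    rw [hnil]
    simp [pathVec, hzero, ← hlast]
  · simp [pathVec, hne, hval]

lemma smul_one_sub_weightedCycle_mulVec_pathVec (x : R) (w : Fin n → A) :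
    (x • (1 : Matrix (Fin n) (Fin n) A) - weightedCycle w) *ᵥ pathVec x w =
      Pi.single 0 (x ^ n • 1 - (List.ofFn w).prod) := by
  ext k
  rw [sub_mulVec, Pi.sub_apply, smul_mulVec, one_mulVec, weightedCycle_mulVec,
    mul_pathVec_add_one, Pi.smul_apply]
  obtain rfl | hk := eq_or_ne k 0
  · simp [pathVec, smul_smul, mul_pow_sub_one (NeZero.ne n)]
  · have : (k : ℕ) ≠ 0 := Fin.val_ne_zero_iff.2 hk
    simp [pathVec, hk, smul_smul, mul_pow_sub_one this]

end WeightedCycle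

section CharpolyWeightedCycle

variable {R ι : Type*} [CommRing R] [Fintype ι] [DecidableEq ι] {n : ℕ} [NeZero n]

lemma det_comp_one_updateCol_zero (v : Fin n → Matrix ι ι R) :
    (comp _ _ _ _ R ((1 : Matrix (Fin n) (Fin n) (Matrix ι ι R)).updateCol 0 v)).det =
      (v 0).det := by
  rw [det_comp_of_blockTriangular (b := OrderDual.toDual) _ OrderDual.toDual.injective]
  · rw [Finset.prod_eq_single 0] <;> simp +contextual
  · intro k l (hkl : k < l)
    simp [hkl.ne, (k.zero_le.trans_lt hkl).ne']

lemma det_comp_weightedCycle_updateCol_zero (x : R) (w : Fin n → Matrix ι ι R)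
    (q : Matrix ι ι R) :
    (comp _ _ _ _ R ((x • 1 - weightedCycle w).updateCol 0 (Pi.single 0 q))).det =
      q.det * (x ^ Fintype.card ι) ^ (n - 1) := by
  have hne {k l : Fin n} (hl : l ≠ 0) (hlk : l ≤ k) : l ≠ k + 1 := by
    grind [add_one_eq_zero_or_val_add_one k]
  rw [det_comp_of_blockTriangular (b := id) _ Function.injective_id]
  · have hdiag : ∀ k ∈ Finset.univ.erase (0 : Fin n),
        ((x • 1 - weightedCycle w).updateCol 0 (Pi.single 0 q) k k).det = x ^ Fintype.card ι := by
      intro k hk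
      have hk0 := Finset.ne_of_mem_erase hk
      simp [hk0, weightedCycle, hne hk0 le_rfl]
    rw [← Finset.mul_prod_erase _ _ (Finset.mem_univ 0), Finset.prod_congr rfl hdiag]
    simp
  · intro k l (hlk : l < k)
    obtain rfl | hl := eq_or_ne l 0
    · simp [hlk.ne']
    · simp [hl, weightedCycle, hne hl hlk.le, hlk.ne']

lemma det_smul_one_sub_comp_weightedCycle_mul_pow (x : R) (w : Fin n → Matrix ι ι R) :
    (x • 1 - comp _ _ _ _ R (weightedCycle w)).det * (x ^ (n - 1)) ^ Fintype.card ι =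
      (x ^ n • 1 - (List.ofFn w).prod).det * (x ^ (n - 1)) ^ Fintype.card ι := by
  let M : Matrix (Fin n) (Fin n) (Matrix ι ι R) := x • 1 - weightedCycle w
  have hM : comp _ _ _ _ R M = x • 1 - comp _ _ _ _ R (weightedCycle w) := by
    rw [← Matrix.comp_one]
    rfl
  have hmul : M * updateCol 1 0 (pathVec x w) =
      M.updateCol 0 (Pi.single 0 (x ^ n • 1 - (List.ofFn w).prod)) := by
    rw [mul_updateCol, mul_one, smul_one_sub_weightedCycle_mulVec_pathVec]
  have hdet := congrArg (fun N => (compRingEquiv _ _ R N).det) hmul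
  simp only [map_mul, det_mul, compRingEquiv_apply, det_comp_one_updateCol_zero, hM, M,
    det_comp_weightedCycle_updateCol_zero] at hdet
  simpa [pathVec, pow_right_comm x] using hdet

lemma charpoly_comp_weightedCycle (w : Fin n → Matrix ι ι R) :
    (comp _ _ _ _ R (weightedCycle w)).charpoly = expand R n (List.ofFn w).prod.charpoly := by
  have hregular : IsRegular ((X ^ (n - 1) : R[X]) ^ Fintype.card ι) :=
    (Polynomial.isRegular_X_pow _).pow _
  let wX : Fin n → Matrix ι ι R[X] := (C : R →+* R[X]).mapMatrix ∘ w
  have hcycle : (comp _ _ _ _ R (weightedCycle w)).charmatrix =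
      (X : R[X]) • 1 - comp _ _ _ _ _ (weightedCycle wX) := by
    rw [charmatrix, ← weightedCycle_map, scalar_apply, smul_one_eq_diagonal]
    rfl
  have hprod : (expand R n : R[X] →+* R[X]).mapMatrix (List.ofFn w).prod.charmatrix =
      (X : R[X]) ^ n • 1 - (List.ofFn wX).prod := by
    rw [← List.map_ofFn (f := w), ← map_list_prod, charmatrix, map_sub,
      scalar_apply, smul_one_eq_diagonal]
    ext i j : 2
    simp [diagonal_apply]
  apply hregular.right
  have := det_smul_one_sub_comp_weightedCycle_mul_pow X wX
  rw [← hcycle, ← hprod, ← RingHom.map_det] at this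
  exact this

end CharpolyWeightedCycle

section RepeatedRoots

lemma not_nodup_roots_of_sq_dvd {K : Type*} [Field K] [IsAlgClosed K] {p q : K[X]} (hp : p ≠ 0)
    (hq : ¬ IsUnit q) (hdvd : q ^ 2 ∣ p) : ¬ p.roots.Nodup := by
  rw [Polynomial.nodup_roots_iff_of_splits hp (IsAlgClosed.splits p)]
  intro hsep
  exact hq (hsep.squarefree q (by rwa [← sq]))

end RepeatedRoots

lemma fnOf_row (a b : ℂ) (p q : ℕ) : fnOf !![a, b] p q =
    if p = 0 ∧ q = 0 then a else if p = 0 ∧ q = 1 then b else 0 := by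
  unfold fnOf
  rcases p with _ | p <;> rcases q with _ | _ | q <;> simp

lemma fnOf_col (a b : ℂ) (p q : ℕ) : fnOf !![a; b] p q =
    if p = 0 ∧ q = 0 then a else if p = 1 ∧ q = 0 then b else 0 := by
  unfold fnOf
  rcases q with _ | q <;> rcases p with _ | _ | p <;> simp

lemma fnOf_one (a p q : ℕ) : fnOf (1 : Matrix (Fin a) (Fin a) ℂ) p q =
    if p = q ∧ p < a then 1 else 0 := by
  unfold fnOf
  simp only [Matrix.one_apply, Fin.mk.injEq]
  grind

lemma fnOf_mid (p q : ℕ) : fnOf (!![1, 0, 0; 0, 0, 1] : Matrix (Fin 2) (Fin 3) ℂ) p q =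
    if p = 0 ∧ q = 0 ∨ p = 1 ∧ q = 2 then 1 else 0 := by
  unfold fnOf
  rcases p with _ | _ | p <;> rcases q with _ | _ | _ | q <;> simp

/-- The entries of `X((a₁ a₂), I₂, …, I₂, I_{2×3}; (b₁, b₂)ᵀ)` for `n = 2 * m`. -/
noncomputable abbrev idSoEnt (m : ℕ) (a1 a2 b1 b2 : ℂ) (p q : ℕ) : ℂ :=
  soEnt (2 * m) !![a1, a2] (fun _ => 1) !![1, 0, 0; 0, 0, 1] !![b1; b2] p q

/-- The matrix `X((a₁ a₂), I₂, …, I₂, I_{2×3}; (b₁, b₂)ᵀ)` for `n = 2 * m`. -/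
noncomputable abbrev idSoMat (m : ℕ) (a1 a2 b1 b2 : ℂ) :
    Matrix (Fin (2 * (2 * m) + 1)) (Fin (2 * (2 * m) + 1)) ℂ :=
  soMat (2 * m) !![a1, a2] (fun _ => 1) !![1, 0, 0; 0, 0, 1] !![b1; b2]

section Entries

variable {m p q : ℕ} {a1 a2 b1 b2 : ℂ}

lemma idSoEnt_zero (hm : 2 ≤ m) :
    idSoEnt m a1 a2 b1 b2 0 q = if q = 1 then a1 else if q = 2 then a2 else 0 := by
  simp only [soEnt, fnOf_row]
  grind

lemma idSoEnt_upper (hp0 : 1 ≤ p) (hp : p ≤ 2 * m - 2) :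
    idSoEnt m a1 a2 b1 b2 p q =
      if p ≤ 2 * m - 3 ∧ q = p + 2 ∨ p = 2 * m - 2 ∧ q = 2 * m + 1 then 1 else 0 := by
  simp only [soEnt, fnOf_one, fnOf_mid]
  grind

lemma idSoEnt_lower (hp0 : 2 * m - 1 ≤ p) (hp : p ≤ 4 * m - 3) (hne : p ≠ 2 * m) :
    idSoEnt m a1 a2 b1 b2 p q =
      if p = 2 * m - 1 ∧ q = 2 * m + 2 ∨ 2 * m < p ∧ q = p + 2 then -1 else 0 := by
  simp only [soEnt, fnOf_one, fnOf_mid]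
  grind

lemma idSoEnt_penultimate {r : ℕ} (hm : 2 ≤ m) (hr : r < 2) :
    idSoEnt m a1 a2 b1 b2 (4 * m - 2 + r) q =
      if q = 0 then if r = 0 then b1 else b2
      else if q = 4 * m then if r = 0 then -a2 else -a1
      else 0 := by
  obtain rfl | rfl : r = 0 ∨ r = 1 := by lia
  all_goals
    simp only [soEnt, fnOf_col, fnOf_row]
    grind

lemma idSoEnt_last (hm : 0 < m) :
    idSoEnt m a1 a2 b1 b2 (4 * m) q = if q = 1 then -b2 else if q = 2 then -b1 else 0 := by
  simp only [soEnt, fnOf_col]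
  grind

lemma idSoEnt_middle_col (hm : 2 ≤ m) : idSoEnt m a1 a2 b1 b2 p (2 * m) = 0 := by
  simp only [soEnt, fnOf_mid, fnOf_one]
  grind

end Entries

/-- The coordinate `i ∈ {0, 1}` of the pair `k ∈ {0, …, 2m - 1}`, as an index of `idSoMat m`.
The pairs are the blocks of the grading, except that the two blocks of size `1` form the pair `0`
and that the middle block of size `3`, which is the pair `m`, loses its middle index `2 * m`. -/
def pairIndex (m k i : ℕ) : ℕ :=
  if k = 0 then if i = 0 then 0 else 4 * m
  else if k < m then 2 * k - 1 + i
  else if k = m then 2 * m - 1 + 2 * i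
  else 2 * k + i

/-- The block of `idSoMat m` from the pair `k` to its cyclic successor. -/
noncomputable def transfer (m : ℕ) (a1 a2 b1 b2 : ℂ) (k : ℕ) : Matrix (Fin 2) (Fin 2) ℂ :=
  if k = 0 then !![a1, a2; -b2, -b1]
  else if k < m then 1
  else if k < 2 * m - 1 then -1
  else !![b1, -a2; b2, -a1]

section PairIndex

variable {m k l : ℕ}

lemma pairIndex_inj {i j : ℕ} (hi : i < 2) (hj : j < 2) (hk : k < 2 * m) (hl : l < 2 * m) :
    pairIndex m k i = pairIndex m l j ↔ k = l ∧ i = j := by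
  grind [pairIndex]

lemma pairIndex_ne_middle {i : ℕ} (hi : i < 2) (hk : k < 2 * m) : pairIndex m k i ≠ 2 * m := by
  grind [pairIndex]

lemma pairIndex_lt {i : ℕ} (hi : i < 2) (hk : k < 2 * m) :
    pairIndex m k i < 2 * (2 * m) + 1 := by
  grind [pairIndex]

variable {a1 a2 b1 b2 : ℂ} (i j : Fin 2)

lemma idSoEnt_pairIndex_zero (hm : 2 ≤ m) :
    idSoEnt m a1 a2 b1 b2 (pairIndex m 0 i) (pairIndex m l j) =
      if l = 1 then transfer m a1 a2 b1 b2 0 i j else 0 := by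
  fin_cases i <;> fin_cases j <;>
    simp only [pairIndex, transfer, idSoEnt_zero hm, idSoEnt_last (zero_lt_two.trans_le hm),
      if_true, one_ne_zero, if_false, Fin.zero_eta, Fin.mk_one, of_apply, cons_val_zero,
      cons_val_one, cons_val', cons_val_fin_one] <;>
    grind

lemma idSoEnt_pairIndex_upper (hk0 : k ≠ 0) (hk : k < m) :
    idSoEnt m a1 a2 b1 b2 (pairIndex m k i) (pairIndex m l j) =
      if l = k + 1 then transfer m a1 a2 b1 b2 k i j else 0 := by
  have hrow : pairIndex m k i = 2 * k - 1 + i := by simp [pairIndex, hk0, hk]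
  have htransfer : transfer m a1 a2 b1 b2 k = 1 := by simp [transfer, hk0, hk]
  rw [htransfer, hrow, idSoEnt_upper (by lia) (by lia)]
  simp only [one_apply, Fin.ext_iff]
  grind [pairIndex]

lemma idSoEnt_pairIndex_lower (hk0 : m ≤ k) (hk : k < 2 * m - 1) :
    idSoEnt m a1 a2 b1 b2 (pairIndex m k i) (pairIndex m l j) =
      if l = k + 1 then transfer m a1 a2 b1 b2 k i j else 0 := by
  have hrow : pairIndex m k i = if k = m then 2 * m - 1 + 2 * (i : ℕ) else 2 * k + i := by
    grind [pairIndex]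
  have htransfer : transfer m a1 a2 b1 b2 k = -1 := by
    grind [transfer]
  rw [htransfer, idSoEnt_lower (by grind) (by grind) (by grind)]
  simp only [Matrix.neg_apply, one_apply, Fin.ext_iff]
  grind [pairIndex]

lemma idSoEnt_pairIndex_last (hm : 2 ≤ m) (hl : l < 2 * m) :
    idSoEnt m a1 a2 b1 b2 (pairIndex m (2 * m - 1) i) (pairIndex m l j) =
      if l = 0 then transfer m a1 a2 b1 b2 (2 * m - 1) i j else 0 := by
  have hrow : pairIndex m (2 * m - 1) i = 4 * m - 2 + i := by grind [pairIndex]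
  have htransfer : transfer m a1 a2 b1 b2 (2 * m - 1) = !![b1, -a2; b2, -a1] := by
    grind [transfer]
  rw [htransfer, hrow, idSoEnt_penultimate hm i.isLt]
  fin_cases i <;> fin_cases j <;>
    simp only [Fin.zero_eta, Fin.mk_one, of_apply, cons_val_zero, cons_val_one, cons_val',
      cons_val_fin_one] <;>
    grind [pairIndex]

end PairIndex

section CharpolySo

variable {m : ℕ} {a1 a2 b1 b2 : ℂ}

lemma idSoEnt_pairIndex [NeZero m] (hm : 2 ≤ m) (k l : Fin (2 * m)) (i j : Fin 2) :
    idSoEnt m a1 a2 b1 b2 (pairIndex m k i) (pairIndex m l j) =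
      weightedCycle (fun k : Fin (2 * m) => transfer m a1 a2 b1 b2 k) k l i j := by
  have hcycle : weightedCycle (fun k : Fin (2 * m) => transfer m a1 a2 b1 b2 k) k l i j =
      if (l : ℕ) = (k + 1 : Fin (2 * m)) then transfer m a1 a2 b1 b2 k i j else 0 := by
    simp only [weightedCycle, of_apply, Fin.val_inj]
    split_ifs <;> rfl
  rw [hcycle]
  obtain ⟨hzero, hlast⟩ | ⟨-, hval⟩ := add_one_eq_zero_or_val_add_one k
  · have hk : (k : ℕ) = 2 * m - 1 := by lia
    rw [hzero, hk]
    exact idSoEnt_pairIndex_last i j hm l.isLt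
  · have hsucc := (k + 1).isLt
    rw [hval]
    obtain hk | hk | hk : (k : ℕ) = 0 ∨ (k : ℕ) ≠ 0 ∧ k < m ∨ m ≤ (k : ℕ) := by lia
    · rw [hk]
      exact idSoEnt_pairIndex_zero i j hm
    · exact idSoEnt_pairIndex_upper i j hk.1 hk.2
    · exact idSoEnt_pairIndex_lower i j hk (by lia)

/-- The splitting of the coordinates of `idSoMat m` into the `2 * m` pairs of `pairIndex` and the
remaining index `2 * m`. -/
def splitIndex (m : ℕ) : Fin (2 * m) × Fin 2 ⊕ Unit → Fin (2 * (2 * m) + 1)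
  | .inl (k, i) => ⟨pairIndex m k i, pairIndex_lt i.isLt k.isLt⟩
  | .inr () => ⟨2 * m, by lia⟩

lemma splitIndex_bijective (m : ℕ) : (splitIndex m).Bijective := by
  rw [Fintype.bijective_iff_injective_and_card]
  constructor
  · rintro (⟨k, i⟩ | _) (⟨l, j⟩ | _) h
    · simpa [splitIndex, pairIndex_inj i.isLt j.isLt k.isLt l.isLt, Fin.val_inj] using h
    · exact absurd (congrArg Fin.val h) (pairIndex_ne_middle i.isLt k.isLt)
    · exact absurd (congrArg Fin.val h).symm (pairIndex_ne_middle j.isLt l.isLt)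
    · rfl
  · simp only [Fintype.card_sum, Fintype.card_prod, Fintype.card_fin, Fintype.card_unit]
    ring

lemma charpoly_idSoMat_eq_expand [NeZero m] (hm : 2 ≤ m) :
    (idSoMat m a1 a2 b1 b2).charpoly = X * expand ℂ (2 * m)
      (List.ofFn fun k : Fin (2 * m) => transfer m a1 a2 b1 b2 k).prod.charpoly := by
  let e := (Equiv.ofBijective _ (splitIndex_bijective m)).symm
  let Y := reindex e e (idSoMat m a1 a2 b1 b2)
  have hY : Y = fromBlocks
      (comp _ _ _ _ ℂ (weightedCycle fun k : Fin (2 * m) => transfer m a1 a2 b1 b2 k)) 0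
      Y.toBlocks₂₁ 0 := by
    ext (⟨k, i⟩ | _) (⟨l, j⟩ | _)
    · exact idSoEnt_pairIndex hm k l i j
    · exact idSoEnt_middle_col hm
    · rfl
    · exact idSoEnt_middle_col hm
  rw [← charpoly_reindex e, show reindex e e _ = Y from rfl, hY, charpoly_fromBlocks_zero₁₂,
    charpoly_comp_weightedCycle, charpoly_zero, Fintype.card_unit, pow_one, mul_comm]

lemma ofFn_transfer (hm : 0 < m) :
    (List.ofFn fun k : Fin (2 * m) => transfer m a1 a2 b1 b2 k) =
      [!![a1, a2; -b2, -b1]] ++ List.replicate (m - 1) 1 ++ List.replicate (m - 1) (-1) ++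
        [!![b1, -a2; b2, -a1]] := by
  apply List.ext_getElem
  · simp only [List.length_ofFn, List.length_append, List.length_replicate, List.length_singleton]
    lia
  · simp only [List.getElem_ofFn, transfer]
    grind

lemma prod_ofFn_transfer (hm : 0 < m) :
    (List.ofFn fun k : Fin (2 * m) => transfer m a1 a2 b1 b2 k).prod = (-1 : ℂ) ^ (m - 1) •
      !![a1 * b1 + a2 * b2, -2 * (a1 * a2); -2 * (b1 * b2), a1 * b1 + a2 * b2] := by
  have hends : !![a1, a2; -b2, -b1] * !![b1, -a2; b2, -a1] =
      !![a1 * b1 + a2 * b2, -2 * (a1 * a2); -2 * (b1 * b2), a1 * b1 + a2 * b2] := by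
    ext i j
    fin_cases i <;> fin_cases j <;> simp <;> ring
  rw [ofFn_transfer hm, ← hends]
  have hsign : (-1 : Matrix (Fin 2) (Fin 2) ℂ) ^ (m - 1) = (-1 : ℂ) ^ (m - 1) • 1 := by
    rw [← neg_one_smul ℂ, smul_pow, one_pow]
  simp only [List.prod_append, List.prod_singleton, List.prod_replicate, one_pow, mul_one, hsign,
    mul_smul_comm, smul_mul_assoc]

lemma charpoly_prod_ofFn_transfer (hm : 0 < m) :
    (List.ofFn fun k : Fin (2 * m) => transfer m a1 a2 b1 b2 k).prod.charpoly =
      (X + C ((-1) ^ m * (a1 * b1 + a2 * b2))) ^ 2 - C (4 * a1 * a2 * b1 * b2) := by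
  have hflip : (-1 : ℂ) ^ m = -(-1) ^ (m - 1) := by
    rw [← mul_pow_sub_one hm.ne', neg_one_mul]
  have hsq : ((-1 : ℂ) ^ (m - 1)) ^ 2 = 1 := by
    rw [← pow_mul, mul_comm, pow_mul, neg_one_sq, one_pow]
  rw [prod_ofFn_transfer hm, hflip, charpoly_fin_two]
  generalize (-1 : ℂ) ^ (m - 1) = e at hsq ⊢
  set M := e • !![a1 * b1 + a2 * b2, -2 * (a1 * a2); -2 * (b1 * b2), a1 * b1 + a2 * b2] with hM
  have htrace : M.trace = 2 * (e * (a1 * b1 + a2 * b2)) := by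
    simp [hM, trace_fin_two, two_mul]
  have hdet : M.det = (e * (a1 * b1 + a2 * b2)) ^ 2 - 4 * a1 * a2 * b1 * b2 := by
    rw [hM, det_smul, det_fin_two_of, Fintype.card_fin]
    linear_combination -4 * a1 * a2 * b1 * b2 * hsq
  simp only [htrace, hdet, neg_mul, map_neg, map_sub, map_mul, map_pow, map_ofNat]
  ring

lemma charpoly_idSoMat (hm : 2 ≤ m) :
    (idSoMat m a1 a2 b1 b2).charpoly =
      X * ((X ^ (2 * m) + C ((-1) ^ m * (a1 * b1 + a2 * b2))) ^ 2 - C (4 * a1 * a2 * b1 * b2)) := by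
  have : NeZero m := ⟨by lia⟩
  rw [charpoly_idSoMat_eq_expand hm, charpoly_prod_ofFn_transfer (by lia), map_sub, map_pow,
    map_add, Polynomial.expand_X, Polynomial.expand_C, Polynomial.expand_C]

end CharpolySo

theorem stmt7_general (n : ℕ) (hn : 4 ≤ n) (hne : Even n) (a1 a2 b1 b2 : ℂ)
    (X : Matrix (Fin (2 * n + 1)) (Fin (2 * n + 1)) ℂ)
    (hX : X = soMat n !![a1, a2] (fun _ => 1) !![1, 0, 0; 0, 0, 1] !![b1; b2]) :
    (∀ lam : ℂ, (lam • (1 : Matrix (Fin (2 * n + 1)) (Fin (2 * n + 1)) ℂ) - X).det =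
      lam * ((lam ^ n + (-1) ^ (n / 2) * (a1 * b1 + a2 * b2)) ^ 2 - 4 * a1 * a2 * b1 * b2)) ∧
    (a1 * a2 * b1 * b2 = 0 → ¬ X.charpoly.roots.Nodup) := by
  obtain ⟨m, rfl⟩ := even_iff_two_dvd.1 hne
  have hcharpoly := charpoly_idSoMat (a1 := a1) (a2 := a2) (b1 := b1) (b2 := b2)
    (show 2 ≤ m by lia)
  rw [idSoMat, ← hX] at hcharpoly
  refine ⟨fun lam => ?_, fun hzero => ?_⟩
  · rw [smul_one_eq_diagonal, ← scalar_apply, ← eval_charpoly, hcharpoly]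
    simp
  · refine not_nodup_roots_of_sq_dvd (charpoly_monic X).ne_zero
      (q := Polynomial.X ^ (2 * m) + C ((-1) ^ m * (a1 * b1 + a2 * b2))) ?_ ?_
    · exact Polynomial.not_isUnit_of_natDegree_pos _
        (by rw [Polynomial.natDegree_X_pow_add_C]; lia)
    · rw [hcharpoly, show 4 * a1 * a2 * b1 * b2 = 0 by linear_combination 4 * hzero]
      simp

/-- Let `X = X((a₁ a₂), I₂, …, I₂, I_{2×3}; (b₁, b₂)ᵀ) ∈ M_{2n+1}(ℂ)`. If
`a₂ = 0` then `det(λI − X) = λ·(λⁿ + (−1)^{n/2}·a₁b₁)²`, and if `a₁ = 0` then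
`det(λI − X) = λ·(λⁿ + (−1)^{n/2}·a₂b₂)²`. In either case the characteristic
polynomial of `X` has a repeated root, so `X` is not regular semisimple. -/
theorem stmt7 (n : ℕ) (hn : 4 ≤ n) (hne : Even n) (a1 a2 b1 b2 : ℂ)
    (X : Matrix (Fin (2 * n + 1)) (Fin (2 * n + 1)) ℂ)
    (hX : X = soMat n !![a1, a2] (fun _ => 1) !![1, 0, 0; 0, 0, 1] !![b1; b2]) :
    (a2 = 0 → ∀ lam : ℂ,
      (lam • (1 : Matrix (Fin (2 * n + 1)) (Fin (2 * n + 1)) ℂ) - X).det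
        = lam * (lam ^ n + (-1) ^ (n / 2) * a1 * b1) ^ 2) ∧
    (a1 = 0 → ∀ lam : ℂ,
      (lam • (1 : Matrix (Fin (2 * n + 1)) (Fin (2 * n + 1)) ℂ) - X).det
        = lam * (lam ^ n + (-1) ^ (n / 2) * a2 * b2) ^ 2) ∧
    ((a1 = 0 ∨ a2 = 0) → ¬ X.charpoly.roots.Nodup) := by
  obtain ⟨hdet, hroots⟩ := stmt7_general n hn hne a1 a2 b1 b2 X hX
  refine ⟨?_, ?_, fun h => hroots (by obtain rfl | rfl := h <;> simp)⟩
  all_goals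
    rintro rfl lam
    rw [hdet]
    ring
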